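/- arXiv:0912.0371 — 2 statements merged into one kernel-verified Lean document; each statement's English description precedes it below -/
import Mathlib

section
/- There exist homogeneous polynomials I_2, I_8, I_12, I_14, I_18, I_20, I_24, I_30 in ℚ[x_1,…,x_8], with I_d homogeneous of degree d for each d ∈ {2, 8, 12, 14, 18, 20, 24, 30}, such that each I_d is invariant under the action of W(E₈), the family (I_2, I_8, I_12, I_14, I_18, I_20, I_24, I_30) is algebraically independent over ℚ, and the invariant subalgebra ℚ[x_1,…,x_8]^{W(E₈)} is exactly the ℚ-subalgebra generated by I_2, I_8, I_12, I_14, I_18, I_20, I_24, I_30. -/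
open MvPolynomial

noncomputable section

/-- The Cartan matrix of type `E₈` in Bourbaki numbering. -/
def cartanE8 : Matrix (Fin 8) (Fin 8) ℚ :=
  !![2, 0, -1, 0, 0, 0, 0, 0;
     0, 2, 0, -1, 0, 0, 0, 0;
     -1, 0, 2, -1, 0, 0, 0, 0;
     0, -1, -1, 2, -1, 0, 0, 0;
     0, 0, 0, -1, 2, -1, 0, 0;
     0, 0, 0, 0, -1, 2, -1, 0;
     0, 0, 0, 0, 0, -1, 2, -1;
     0, 0, 0, 0, 0, 0, -1, 2]

/-- The linear functional `v ↦ ∑ j, A j i * v j`. -/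
def phiE8 (i : Fin 8) : (Fin 8 → ℚ) →ₗ[ℚ] ℚ :=
  ∑ j, cartanE8 j i • LinearMap.proj j

lemma phiE8_apply (i : Fin 8) (v : Fin 8 → ℚ) :
    phiE8 i v = ∑ j, cartanE8 j i * v j := by
  simp [phiE8, LinearMap.proj]

/-- The simple reflection `s_i` as a linear endomorphism:
`s_i (e_j) = e_j - A j i • e_i`. -/
def reflE8 (i : Fin 8) : Module.End ℚ (Fin 8 → ℚ) :=
  LinearMap.id - (phiE8 i).smulRight (Pi.single i 1)

lemma cartanE8_diag (i : Fin 8) : cartanE8 i i = 2 := by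
  fin_cases i <;> norm_num [cartanE8]

lemma phiE8_single (i : Fin 8) : phiE8 i (Pi.single i 1) = 2 := by
  rw [phiE8_apply]
  rw [Finset.sum_eq_single i]
  · simp [cartanE8_diag]
  · intro b _ hb
    simp [Pi.single_apply, hb]
  · simp

lemma reflE8_apply_self (i : Fin 8) (v : Fin 8 → ℚ) :
    reflE8 i (reflE8 i v) = v := by
  have h : phiE8 i (reflE8 i v) = - phiE8 i v := by
    simp only [reflE8, LinearMap.sub_apply, LinearMap.id_apply,
      LinearMap.smulRight_apply, map_sub, map_smul, smul_eq_mul, phiE8_single]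
    ring
  have h2 : reflE8 i (reflE8 i v) = reflE8 i v - phiE8 i (reflE8 i v) • (Pi.single i 1 : Fin 8 → ℚ) := rfl
  rw [h2, h]
  have h3 : reflE8 i v = v - phiE8 i v • (Pi.single i 1 : Fin 8 → ℚ) := rfl
  rw [h3]
  module

lemma reflE8_invol (i : Fin 8) : reflE8 i * reflE8 i = 1 := by
  apply LinearMap.ext
  intro v
  exact reflE8_apply_self i v

/-- The simple reflection `s_i` as an element of `GL(ℚ⁸)`. -/
def sE8 (i : Fin 8) : (Module.End ℚ (Fin 8 → ℚ))ˣ :=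
  ⟨reflE8 i, reflE8 i, reflE8_invol i, reflE8_invol i⟩

/-- The Weyl group `W(E₈)`, the subgroup of `GL(ℚ⁸)` generated by the simple
reflections. -/
def WeylE8 : Subgroup (Module.End ℚ (Fin 8 → ℚ))ˣ :=
  Subgroup.closure (Set.range sE8)

/-- The action of an element `g ∈ GL(ℚ⁸)` on polynomials by linear substitution
of variables: `(g · f)(x) = f (g⁻¹ x)`, i.e. `X i ↦ ∑ j, (g⁻¹ e_j) i • X j`. -/
def polyAct (g : (Module.End ℚ (Fin 8 → ℚ))ˣ) :
    MvPolynomial (Fin 8) ℚ →ₐ[ℚ] MvPolynomial (Fin 8) ℚ :=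
  aeval (fun i => ∑ j, C (((g⁻¹ : (Module.End ℚ (Fin 8 → ℚ))ˣ) :
    Module.End ℚ (Fin 8 → ℚ)) (Pi.single j 1) i) * X j)

end

/-! Let `W` be generated by reflections and let `J` be the Jacobian determinant of homogeneous
invariants `I₁, …, Iₙ` of degrees `d₁, …, dₙ`. By the chain rule `J` changes sign under every
reflection in `W`, and a polynomial which does so vanishes on all reflecting hyperplanes, so it is
divisible by the product of all root forms. If `J ≠ 0` and `∑ (dₖ - 1)` is the number of
reflections, then `J` is a scalar multiple of that product and hence divides every semi-invariant.

Given an invariant `f` of degree `m`, replacing `Iₗ` by `f` in the Jacobian determinant gives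
`J * gₗ` with `gₗ` invariant of degree less than `m`, and Cramer's rule together with Euler's
identity yields `m f = ∑ dₗ gₗ Iₗ`. Induction on the degree shows that the `Iₗ` generate the
invariants. Their algebraic independence also follows from `J ≠ 0`.

For `E₈` we take power sums of the 120 positive roots; the degrees satisfy `∑ (dₖ - 1) = 120`, and
`J` is nonzero modulo 31 at the half-sum of the positive coroots.
-/

/-! ### Linear forms -/

section LinearForm

variable {σ R : Type*} [Fintype σ] [CommRing R]

/-- The linear form `∑ k, c k • X k` with coefficient vector `c`. -/
noncomputable def linearForm : (σ → R) →ₗ[R] MvPolynomial σ R :=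
  Fintype.linearCombination R X

theorem linearForm_apply (c : σ → R) : linearForm c = ∑ k, c k • X k :=
  Fintype.linearCombination_apply R X c

theorem linearForm_single_one [DecidableEq σ] (k : σ) :
    linearForm (Pi.single k 1 : σ → R) = X k := by
  simp [linearForm, Fintype.linearCombination_apply_single]

theorem isHomogeneous_linearForm (c : σ → R) : (linearForm c).IsHomogeneous 1 := by
  rw [linearForm_apply]
  refine IsHomogeneous.sum _ _ _ fun k _ => ?_
  rw [smul_eq_C_mul]
  exact isHomogeneous_C_mul_X (c k) k

theorem eval_linearForm (x c : σ → R) : eval x (linearForm c) = c ⬝ᵥ x := by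
  simp [linearForm_apply, dotProduct, smul_eval]

theorem pderiv_linearForm (j : σ) (c : σ → R) : pderiv j (linearForm c) = C (c j) := by
  classical
  simp [linearForm_apply, pderiv_X, Pi.single_apply, smul_eq_C_mul]

theorem linearForm_injective : Function.Injective (linearForm : (σ → R) → MvPolynomial σ R) :=
  fun a b hab => funext fun j => C_injective σ R <| by
    rw [← pderiv_linearForm, hab, pderiv_linearForm]

variable {K : Type*} [Field K]

theorem irreducible_linearForm {c : σ → K} (hc : c ≠ 0) : Irreducible (linearForm c) := by
  have hne : linearForm c ≠ 0 := (map_ne_zero_iff _ linearForm_injective).2 hc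
  refine irreducible_of_totalDegree_eq_one ((isHomogeneous_linearForm c).totalDegree hne) ?_
  intro x hx
  rw [isUnit_iff_ne_zero]
  rintro rfl
  exact hne (MvPolynomial.ext _ _ fun m => by simpa using hx m)

theorem exists_smul_eq_of_linearForm_dvd {a b : σ → K} (hb : b ≠ 0)
    (h : linearForm a ∣ linearForm b) : ∃ q : K, b = q • a := by
  obtain ⟨g, hg⟩ := h
  have ha : a ≠ 0 := by
    rintro rfl
    exact hb (linearForm_injective (by rw [hg, map_zero, zero_mul]))
  have hg_unit : IsUnit g := ((irreducible_linearForm hb).isUnit_or_isUnit hg).resolve_left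
    (irreducible_linearForm ha).not_isUnit
  obtain ⟨q, -, rfl⟩ := isUnit_iff_eq_C_of_isReduced.1 hg_unit
  exact ⟨q, linearForm_injective (by rw [hg, map_smul, smul_eq_C_mul, mul_comm])⟩

theorem prod_linearForm_dvd {ι : Type*} {s : Finset ι} {c : ι → σ → K} {P : MvPolynomial σ K}
    (hc : ∀ i ∈ s, c i ≠ 0) (hprop : ∀ i ∈ s, ∀ j ∈ s, i ≠ j → ∀ q : K, c j ≠ q • c i)
    (hP : ∀ i ∈ s, linearForm (c i) ∣ P) : ∏ i ∈ s, linearForm (c i) ∣ P := by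
  refine Finset.prod_dvd_of_isRelPrime (fun i hi j hj hij => ?_) hP
  refine (irreducible_linearForm (hc i hi)).isRelPrime_iff_not_dvd.2 fun hdvd => ?_
  obtain ⟨q, hq⟩ := exists_smul_eq_of_linearForm_dvd (hc j hj) hdvd
  exact hprop i hi j hj hij q hq

end LinearForm

/-! ### Linear substitutions -/

section LinearSubst

variable {σ R : Type*} [Fintype σ] [CommRing R]

/-- The substitution `f(x) ↦ f(M x)` of a matrix into the variables of a polynomial. -/
noncomputable def linearSubst (M : Matrix σ σ R) : MvPolynomial σ R →ₐ[R] MvPolynomial σ R :=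
  aeval fun k => linearForm (M.row k)

theorem linearSubst_X (M : Matrix σ σ R) (k : σ) : linearSubst M (X k) = linearForm (M.row k) :=
  aeval_X _ k

theorem linearSubst_linearForm (M : Matrix σ σ R) (c : σ → R) :
    linearSubst M (linearForm c) = linearForm (Matrix.vecMul c M) := by
  rw [Matrix.vecMul_eq_sum, map_sum, linearForm_apply, map_sum]
  simp only [map_smul, linearSubst_X, Matrix.row]

theorem linearSubst_one [DecidableEq σ] : linearSubst (1 : Matrix σ σ R) = AlgHom.id R _ := by
  ext k : 1
  have hk : (1 : Matrix σ σ R).row k = Pi.single k 1 := funext fun j => Matrix.one_eq_pi_single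
  rw [linearSubst_X, hk, linearForm_single_one, AlgHom.id_apply]

theorem linearSubst_mul (M N : Matrix σ σ R) :
    linearSubst (M * N) = (linearSubst N).comp (linearSubst M) := by
  ext k : 1
  rw [AlgHom.comp_apply, linearSubst_X, linearSubst_X, linearSubst_linearForm]
  rfl

theorem isHomogeneous_linearSubst (M : Matrix σ σ R) {f : MvPolynomial σ R} {n : ℕ}
    (hf : f.IsHomogeneous n) : (linearSubst M f).IsHomogeneous n := by
  simpa [linearSubst] using hf.aeval _ fun k => isHomogeneous_linearForm (M.row k)

theorem linearSubst_homogeneousComponent (M : Matrix σ σ R) (n : ℕ) (f : MvPolynomial σ R) :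
    linearSubst M (homogeneousComponent n f) = homogeneousComponent n (linearSubst M f) := by
  conv_rhs => rw [← sum_homogeneousComponent f, map_sum, map_sum]
  simp only [fun m => homogeneousComponent_of_mem
    (isHomogeneous_linearSubst M (homogeneousComponent_isHomogeneous m f)) (m := n),
    Finset.sum_ite_eq, Finset.mem_range]
  split_ifs with h
  · rfl
  · rw [homogeneousComponent_eq_zero _ _ (by lia), map_zero]

variable [DecidableEq σ]

/-- The matrix of `x ↦ x - (v ⬝ᵥ x) • u`, a reflection when `v ⬝ᵥ u = 2`. -/
def reflectionMatrix (u v : σ → R) : Matrix σ σ R :=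
  1 - Matrix.vecMulVec u v

theorem linearForm_dvd_linearSubst_reflectionMatrix_sub (u v : σ → R) (P : MvPolynomial σ R) :
    linearForm v ∣ linearSubst (reflectionMatrix u v) P - P := by
  let π := Ideal.Quotient.mkₐ R (Ideal.span {linearForm v})
  have hπ : π.comp (linearSubst (reflectionMatrix u v)) = π := by
    ext k
    have hk : linearSubst (reflectionMatrix u v) (X k) = X k - u k • linearForm v := by
      rw [linearSubst_X, ← linearForm_single_one, ← map_smul, ← map_sub]
      congr 1
      ext j
      simp [reflectionMatrix, Matrix.vecMulVec_apply, Matrix.one_apply, Pi.single_apply, eq_comm]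
    have hv : π (linearForm v) = 0 :=
      Ideal.Quotient.eq_zero_iff_mem.2 (Ideal.mem_span_singleton_self _)
    rw [AlgHom.comp_apply, hk, map_sub, map_smul, hv, smul_zero, sub_zero]
  rw [← Ideal.mem_span_singleton, ← Ideal.Quotient.eq_zero_iff_mem]
  exact (map_sub π _ _).trans (sub_eq_zero.2 (DFunLike.congr_fun hπ P))

theorem det_reflectionMatrix (u v : σ → R) : (reflectionMatrix u v).det = 1 - v ⬝ᵥ u := by
  rw [reflectionMatrix, Matrix.vecMulVec_eq Unit, Matrix.det_one_sub_mul_comm, Matrix.det_unique]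
  simp [Matrix.replicateRow_mul_replicateCol_apply]

theorem vecMul_reflectionMatrix (c u v : σ → R) :
    Matrix.vecMul c (reflectionMatrix u v) = c - (c ⬝ᵥ u) • v := by
  rw [reflectionMatrix, Matrix.vecMul_sub, Matrix.vecMul_one, Matrix.vecMul_vecMulVec]

end LinearSubst

/-! ### Jacobian matrices -/

section Jacobian

variable {ι σ τ R : Type*} [CommRing R]

/-- The Jacobian matrix `(∂F k / ∂x j)` of a family of polynomials. -/
noncomputable def jacobianMatrix (F : ι → MvPolynomial σ R) : Matrix ι σ (MvPolynomial σ R) :=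
  Matrix.of fun k j => pderiv j (F k)

theorem jacobianMatrix_apply (F : ι → MvPolynomial σ R) (k : ι) (j : σ) :
    jacobianMatrix F k j = pderiv j (F k) :=
  rfl

theorem jacobianMatrix_update [DecidableEq ι] (F : ι → MvPolynomial σ R) (l : ι)
    (f : MvPolynomial σ R) :
    jacobianMatrix (Function.update F l f) =
      (jacobianMatrix F).updateRow l fun j => pderiv j f := by
  ext1 k j
  rcases eq_or_ne k l with rfl | hk
  · simp [jacobianMatrix_apply]
  · simp [jacobianMatrix_apply, hk]

theorem pderiv_aeval [Fintype τ] (G : τ → MvPolynomial σ R) (j : σ) (P : MvPolynomial τ R) :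
    pderiv j (aeval G P) = ∑ l, aeval G (pderiv l P) * pderiv j (G l) := by
  classical
  induction P using MvPolynomial.induction_on with
  | C a => simp
  | add p q hp hq => simp only [map_add, hp, hq, add_mul, Finset.sum_add_distrib]
  | mul_X p i hp =>
    simp only [map_mul, aeval_X, Derivation.leibniz, hp, map_add, smul_eq_mul, pderiv_X, add_mul,
      Finset.sum_add_distrib, Finset.mul_sum, mul_assoc]
    simp [Pi.single_apply]

theorem jacobianMatrix_aeval [Fintype τ] (G : τ → MvPolynomial σ R) (F : ι → MvPolynomial τ R) :
    jacobianMatrix (fun k => aeval G (F k)) =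
      (jacobianMatrix F).map (aeval G) * jacobianMatrix G := by
  ext1 k j
  exact pderiv_aeval G j (F k)

variable [Fintype σ]

theorem jacobianMatrix_linearForm (M : Matrix ι σ R) :
    jacobianMatrix (fun k => linearForm (M.row k)) = M.map C := by
  ext1 k j
  exact pderiv_linearForm j (M.row k)

section Square

variable [DecidableEq σ]

theorem C_det_mul_linearSubst_det_jacobianMatrix {F : σ → MvPolynomial σ R} {M : Matrix σ σ R}
    (hF : ∀ k, linearSubst M (F k) = F k) :
    C M.det * linearSubst M (jacobianMatrix F).det = (jacobianMatrix F).det := by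
  have hchain : jacobianMatrix F = (jacobianMatrix F).map (linearSubst M) * M.map C := by
    rw [← jacobianMatrix_linearForm, linearSubst, ← jacobianMatrix_aeval, ← linearSubst]
    simp only [hF]
  conv_rhs => rw [hchain, Matrix.det_mul]
  rw [AlgHom.map_det, RingHom.map_det, mul_comm]
  rfl

theorem isHomogeneous_det {A : Matrix σ σ (MvPolynomial τ R)} {e : σ → ℕ}
    (hA : ∀ k j, (A k j).IsHomogeneous (e k)) : A.det.IsHomogeneous (∑ k, e k) := by
  rw [← Matrix.det_transpose, Matrix.det_apply']
  refine IsHomogeneous.sum _ _ _ fun s _ => ?_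
  have hsign : ((Equiv.Perm.sign s : ℤ) : MvPolynomial τ R).IsHomogeneous 0 := by
    rw [← map_intCast (C : R →+* MvPolynomial τ R)]
    exact isHomogeneous_C _ _
  simpa using hsign.mul (IsHomogeneous.prod Finset.univ _ e fun k _ => hA k (s k))

theorem isHomogeneous_det_jacobianMatrix {F : σ → MvPolynomial σ R} {d : σ → ℕ}
    (hF : ∀ k, (F k).IsHomogeneous (d k)) :
    (jacobianMatrix F).det.IsHomogeneous (∑ k, (d k - 1)) :=
  isHomogeneous_det fun k _ => (hF k).pderiv

theorem pos_of_det_jacobianMatrix_ne_zero {F : σ → MvPolynomial σ R} {d : σ → ℕ}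
    (hF : ∀ k, (F k).IsHomogeneous (d k)) (hJ : (jacobianMatrix F).det ≠ 0) (k : σ) :
    0 < d k := by
  refine Nat.pos_of_ne_zero fun hk => hJ (Matrix.det_eq_zero_of_row_eq_zero k fun j => ?_)
  have hconst := totalDegree_eq_zero_iff_eq_C.1 (Nat.le_zero.1 (hk ▸ (hF k).totalDegree_le))
  rw [jacobianMatrix_apply, hconst, pderiv_C]

theorem det_mul_eq_sum_det_updateRow_mul {A : Type*} [CommRing A] (M : Matrix σ σ A) (b : σ → A)
    (j : σ) : M.det * b j = ∑ l, (M.updateRow l b).det * M l j := by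
  have hcramer := congrFun (Matrix.mulVec_cramer M.transpose b) j
  simp only [Matrix.mulVec, dotProduct, Matrix.cramer_transpose_apply, Matrix.det_transpose,
    Matrix.transpose_apply, Pi.smul_apply, smul_eq_mul] at hcramer
  rw [← hcramer]
  exact Finset.sum_congr rfl fun l _ => mul_comm _ _

theorem nsmul_det_jacobianMatrix_mul {F : σ → MvPolynomial σ R} {d : σ → ℕ}
    (hF : ∀ k, (F k).IsHomogeneous (d k)) {f : MvPolynomial σ R} {n : ℕ}
    (hf : f.IsHomogeneous n) :
    n • ((jacobianMatrix F).det * f) =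
      ∑ l, d l • ((jacobianMatrix (Function.update F l f)).det * F l) := by
  calc n • ((jacobianMatrix F).det * f)
      = ∑ j, X j * ((jacobianMatrix F).det * pderiv j f) := by
        rw [← mul_smul_comm, ← hf.sum_X_mul_pderiv, Finset.mul_sum]
        exact Finset.sum_congr rfl fun j _ => mul_left_comm _ _ _
    _ = ∑ j, ∑ l, (jacobianMatrix (Function.update F l f)).det * (X j * pderiv j (F l)) := by
        refine Finset.sum_congr rfl fun j _ => ?_
        rw [det_mul_eq_sum_det_updateRow_mul _ (fun j => pderiv j f), Finset.mul_sum]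
        simp only [jacobianMatrix_update, jacobianMatrix_apply, mul_left_comm]
    _ = ∑ l, d l • ((jacobianMatrix (Function.update F l f)).det * F l) := by
        rw [Finset.sum_comm]
        simp only [← Finset.mul_sum, (hF _).sum_X_mul_pderiv, mul_smul_comm]

end Square

theorem totalDegree_pderiv_le (j : τ) (P : MvPolynomial τ R) :
    (pderiv j P).totalDegree ≤ P.totalDegree - 1 := by
  refine Finset.sup_le fun m hm => ?_
  have hmem : m + Finsupp.single j 1 ∈ P.support := by
    rw [mem_support_iff, coeff_pderiv] at hm
    exact mem_support_iff.2 (left_ne_zero_of_mul hm)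
  have hle := le_totalDegree hmem
  rw [Finsupp.sum_add_index' (fun _ => rfl) fun _ _ _ => rfl, Finsupp.sum_single_index rfl] at hle
  exact Nat.le_sub_of_add_le hle

theorem eq_C_of_pderiv_eq_zero [NoZeroDivisors R] [CharZero R] {P : MvPolynomial τ R}
    (hP : ∀ j, pderiv j P = 0) : P = C (coeff 0 P) := by
  classical
  ext m
  rw [coeff_C]
  split_ifs with hm
  · rw [hm]
  · obtain ⟨j, hj⟩ := Finsupp.ne_iff.1 (Ne.symm hm)
    have hcoeff := coeff_pderiv P (m - Finsupp.single j 1) (i := j)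
    have hle : Finsupp.single j 1 ≤ m :=
      Finsupp.single_le_iff.2 (Nat.one_le_iff_ne_zero.2 hj)
    rw [hP, coeff_zero, tsub_add_cancel_of_le hle] at hcoeff
    exact (mul_eq_zero.1 hcoeff.symm).resolve_right (Nat.cast_add_one_ne_zero _)

theorem algebraicIndependent_of_det_jacobianMatrix_ne_zero [DecidableEq σ] [IsDomain R]
    [CharZero R] {F : σ → MvPolynomial σ R} (hJ : (jacobianMatrix F).det ≠ 0) :
    AlgebraicIndependent R F := by
  refine algebraicIndependent_iff.2 fun P => ?_
  induction hm : P.totalDegree using Nat.strong_induction_on generalizing P with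
  | _ m ih =>
    intro hP
    have hpderiv : ∀ l, aeval F (pderiv l P) = 0 := by
      refine congrFun (Matrix.eq_zero_of_vecMul_eq_zero hJ (funext fun j => ?_))
      exact (pderiv_aeval F j P).symm.trans (by rw [hP, map_zero]; rfl)
    have hC : P = C (coeff 0 P) := by
      rcases Nat.eq_zero_or_pos m with rfl | hpos
      · exact totalDegree_eq_zero_iff_eq_C.1 hm
      · refine eq_C_of_pderiv_eq_zero fun l => ih _ ?_ _ rfl (hpderiv l)
        exact (totalDegree_pderiv_le l P).trans_lt (by lia)
    rw [hC, aeval_C] at hP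
    rw [hC, (FaithfulSMul.algebraMap_injective R _).eq_iff' (map_zero _) |>.1 hP, C_0]

end Jacobian

/-! ### Chevalley's Jacobian criterion for basic invariants -/

section Criterion

theorem dvd_of_dvd_of_totalDegree_le {σ K : Type*} [Field K] {p q : MvPolynomial σ K}
    (hpq : p ∣ q) (hq : q ≠ 0) (hdeg : q.totalDegree ≤ p.totalDegree) : q ∣ p := by
  obtain ⟨r, rfl⟩ := hpq
  have hr := right_ne_zero_of_mul hq
  rw [totalDegree_mul_of_isDomain (left_ne_zero_of_mul hq) hr] at hdeg
  have hunit : IsUnit r := by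
    have hC := totalDegree_eq_zero_iff_eq_C.1 (show r.totalDegree = 0 by lia)
    rw [hC, C_ne_zero] at hr
    rw [hC]
    exact hr.isUnit.map C
  exact hunit.mul_right_dvd.2 dvd_rfl

variable {σ ι K : Type*} [Fintype σ] [Field K]

/-- The subalgebra of polynomials `f` with `f(M i x) = f(x)` for every matrix of the family `M`,
i.e. of the invariants of the group generated by the `M i` when these are invertible. -/
noncomputable def linearInvariants (M : ι → Matrix σ σ K) : Subalgebra K (MvPolynomial σ K) :=
  ⨅ i, AlgHom.equalizer (linearSubst (M i)) (AlgHom.id K _)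

theorem mem_linearInvariants {M : ι → Matrix σ σ K} {f : MvPolynomial σ K} :
    f ∈ linearInvariants M ↔ ∀ i, linearSubst (M i) f = f := by
  simp [linearInvariants, Algebra.mem_iInf, AlgHom.mem_equalizer]

theorem homogeneousComponent_mem_linearInvariants {M : ι → Matrix σ σ K} {f : MvPolynomial σ K}
    (hf : f ∈ linearInvariants M) (n : ℕ) : homogeneousComponent n f ∈ linearInvariants M := by
  rw [mem_linearInvariants] at hf ⊢
  exact fun i => by rw [linearSubst_homogeneousComponent, hf]

variable [DecidableEq σ]

/-- `P` is det-semi-invariant under the family `M` when `det (M i) • P(M i x) = P(x)` for every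
`i`; if the `M i` are reflections, this says that each of them changes the sign of `P`. -/
def IsDetSemiInvariant (M : ι → Matrix σ σ K) (P : MvPolynomial σ K) : Prop :=
  ∀ i, C (M i).det * linearSubst (M i) P = P

variable {M : ι → Matrix σ σ K} {I : σ → MvPolynomial σ K} {d : σ → ℕ}

theorem isDetSemiInvariant_det_jacobianMatrix (hI : ∀ k, I k ∈ linearInvariants M) :
    IsDetSemiInvariant M (jacobianMatrix I).det := fun i =>
  C_det_mul_linearSubst_det_jacobianMatrix fun k => mem_linearInvariants.1 (hI k) i

theorem mem_linearInvariants_of_isDetSemiInvariant_mul {P g : MvPolynomial σ K} (hP0 : P ≠ 0)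
    (hP : IsDetSemiInvariant M P) (hPg : IsDetSemiInvariant M (P * g)) :
    g ∈ linearInvariants M := by
  refine mem_linearInvariants.2 fun i => mul_left_cancel₀ hP0 ?_
  have hi := hPg i
  rwa [map_mul, ← mul_assoc, hP i] at hi

theorem exists_det_jacobianMatrix_update_eq_mul (hI : ∀ k, I k ∈ linearInvariants M)
    (hJ : (jacobianMatrix I).det ≠ 0)
    (hdvd : ∀ P, IsDetSemiInvariant M P → (jacobianMatrix I).det ∣ P) {f : MvPolynomial σ K}
    (hf : f ∈ linearInvariants M) (l : σ) :
    ∃ g ∈ linearInvariants M,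
      (jacobianMatrix (Function.update I l f)).det = (jacobianMatrix I).det * g := by
  have hupdate : ∀ k, Function.update I l f k ∈ linearInvariants M :=
    (Function.forall_update_iff I fun _ p => p ∈ linearInvariants M).2 ⟨hf, fun k _ => hI k⟩
  have hsemi := isDetSemiInvariant_det_jacobianMatrix hupdate
  obtain ⟨g, hg⟩ := hdvd _ hsemi
  rw [hg] at hsemi
  exact ⟨g, mem_linearInvariants_of_isDetSemiInvariant_mul hJ
    (isDetSemiInvariant_det_jacobianMatrix hI) hsemi, hg⟩

theorem totalDegree_lt_of_det_jacobianMatrix_update_eq_mul (hId : ∀ k, (I k).IsHomogeneous (d k))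
    (hJ : (jacobianMatrix I).det ≠ 0) {f g : MvPolynomial σ K} {n : ℕ} (hn : 0 < n)
    (hf : f.IsHomogeneous n) {l : σ}
    (hg : (jacobianMatrix (Function.update I l f)).det = (jacobianMatrix I).det * g) :
    g.totalDegree < n := by
  rcases eq_or_ne g 0 with rfl | hg0
  · rwa [totalDegree_zero]
  have hupdate : ∀ k, (Function.update I l f k).IsHomogeneous (Function.update d l n k) := by
    intro k
    rcases eq_or_ne k l with rfl | hk
    · simpa using hf
    · simpa [hk] using hId k
  have hle := (isHomogeneous_det_jacobianMatrix hupdate).totalDegree_le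
  have herase : ∑ k ∈ Finset.univ.erase l, (Function.update d l n k - 1) =
      ∑ k ∈ Finset.univ.erase l, (d k - 1) :=
    Finset.sum_congr rfl fun k hk => by rw [Function.update_of_ne (Finset.ne_of_mem_erase hk)]
  rw [hg, totalDegree_mul_of_isDomain hJ hg0,
    (isHomogeneous_det_jacobianMatrix hId).totalDegree hJ,
    ← Finset.add_sum_erase _ _ (Finset.mem_univ l),
    ← Finset.add_sum_erase _ (fun k => Function.update d l n k - 1) (Finset.mem_univ l),
    herase, Function.update_self] at hle
  have hpos := pos_of_det_jacobianMatrix_ne_zero hId hJ l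
  lia

theorem IsDetSemiInvariant.linearForm_vecMul_dvd {P : MvPolynomial σ K}
    (hP : IsDetSemiInvariant M P) {c : σ → K} (hc : linearForm c ∣ P) (i : ι) :
    linearForm (Matrix.vecMul c (M i)) ∣ P := by
  rw [← linearSubst_linearForm, ← hP i]
  exact dvd_mul_of_dvd_right (map_dvd _ hc) _

variable [CharZero K]

theorem IsDetSemiInvariant.linearForm_dvd_of_reflectionMatrix {P : MvPolynomial σ K}
    (hP : IsDetSemiInvariant M P) {u v : σ → K} (hvu : v ⬝ᵥ u = 2) {i : ι}
    (hi : M i = reflectionMatrix u v) : linearForm v ∣ P := by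
  have hneg : linearSubst (reflectionMatrix u v) P = -P := by
    have hPi := hP i
    rw [hi, det_reflectionMatrix, hvu, show (1 - 2 : K) = -1 by norm_num, C_neg, C_1] at hPi
    linear_combination -hPi
  have hdvd := linearForm_dvd_linearSubst_reflectionMatrix_sub u v P
  rw [hneg, show -P - P = C (-2) * P by rw [C_neg, map_ofNat]; ring] at hdvd
  exact ((isUnit_iff_ne_zero.2 (by norm_num : (-2 : K) ≠ 0)).map C).dvd_mul_left.1 hdvd

theorem mem_adjoin_of_isHomogeneous_of_mem_linearInvariants
    (hId : ∀ k, (I k).IsHomogeneous (d k)) (hI : ∀ k, I k ∈ linearInvariants M)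
    (hJ : (jacobianMatrix I).det ≠ 0)
    (hdvd : ∀ P, IsDetSemiInvariant M P → (jacobianMatrix I).det ∣ P)
    {f : MvPolynomial σ K} {n : ℕ} (hn : 0 < n) (hfn : f.IsHomogeneous n)
    (hf : f ∈ linearInvariants M)
    (ih : ∀ g ∈ linearInvariants M, g.totalDegree < n → g ∈ Algebra.adjoin K (Set.range I)) :
    f ∈ Algebra.adjoin K (Set.range I) := by
  choose g hg_inv hg using exists_det_jacobianMatrix_update_eq_mul hI hJ hdvd hf
  have heuler : n • f = ∑ l, d l • (g l * I l) := by
    refine mul_left_cancel₀ hJ ?_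
    rw [mul_smul_comm, nsmul_det_jacobianMatrix_mul hId hfn, Finset.mul_sum]
    simp only [hg, mul_smul_comm, mul_assoc]
  have hmem : n • f ∈ (Algebra.adjoin K (Set.range I)).toSubmodule := by
    rw [heuler]
    refine Subalgebra.sum_mem _ fun l _ => Subalgebra.nsmul_mem _ (Subalgebra.mul_mem _ ?_ ?_) _
    · exact ih _ (hg_inv l)
        (totalDegree_lt_of_det_jacobianMatrix_update_eq_mul hId hJ hn hfn (hg l))
    · exact Algebra.subset_adjoin ⟨l, rfl⟩
  rw [← Nat.cast_smul_eq_nsmul K] at hmem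
  exact (Submodule.smul_mem_iff _ (Nat.cast_ne_zero.2 hn.ne')).1 hmem

theorem linearInvariants_eq_adjoin_of_det_jacobianMatrix_dvd
    (hId : ∀ k, (I k).IsHomogeneous (d k)) (hI : ∀ k, I k ∈ linearInvariants M)
    (hJ : (jacobianMatrix I).det ≠ 0)
    (hdvd : ∀ P, IsDetSemiInvariant M P → (jacobianMatrix I).det ∣ P) :
    linearInvariants M = Algebra.adjoin K (Set.range I) := by
  refine le_antisymm (fun f hf => ?_) (Algebra.adjoin_le (Set.range_subset_iff.2 hI))
  induction hm : f.totalDegree using Nat.strong_induction_on generalizing f with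
  | _ m ih =>
    rw [← sum_homogeneousComponent f]
    refine Subalgebra.sum_mem _ fun n hn => ?_
    rcases Nat.eq_zero_or_pos n with rfl | hpos
    · rw [homogeneousComponent_zero]
      exact Subalgebra.algebraMap_mem _ _
    · refine mem_adjoin_of_isHomogeneous_of_mem_linearInvariants hId hI hJ hdvd hpos
        (homogeneousComponent_isHomogeneous n f) (homogeneousComponent_mem_linearInvariants hf n)
        fun g hg hgn => ih _ (hgn.trans_le ?_) g hg rfl
      rw [Finset.mem_range] at hn
      lia

end Criterion

/-! ### The root system of type `E₈` -/

namespace WeylE8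

open Finset

/-- The simple root `α_i` as an integral linear form: its `j`-th coefficient is `⟨α_i, α_j^∨⟩`. -/
def simpleRoot (i : Fin 8) : Fin 8 → ℤ :=
  CartanMatrix.E₈.row i

/-- The reflection `β ↦ β - ⟨β, α_i^∨⟩ α_i` on integral linear forms. -/
def reflect (i : Fin 8) (c : Fin 8 → ℤ) : Fin 8 → ℤ :=
  c - c i • simpleRoot i

/-- The positive roots of height `h`, generated upwards from the simple roots: a root `β` with
`⟨β, α_i^∨⟩ = -1` has `β + α_i` as its reflection. -/
def rootsOfHeight : ℕ → Finset (Fin 8 → ℤ)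
  | 0 => ∅
  | 1 => univ.image simpleRoot
  | h + 2 => (rootsOfHeight (h + 1)).biUnion fun c =>
      ({i | c i = -1} : Finset (Fin 8)).image fun i => c + simpleRoot i

/-- The positive roots of `E₈`; the highest root has height 29. -/
@[irreducible]
def posRoots : Finset (Fin 8 → ℤ) :=
  (range 30).biUnion rootsOfHeight

/-- The half-sum of the positive coroots in the basis of simple coroots: pairing with `halfCosum`
is the height. -/
def halfCosum : Fin 8 → ℤ :=
  ![46, 68, 91, 135, 110, 84, 57, 29]

theorem simpleRoot_self (i : Fin 8) : simpleRoot i i = 2 :=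
  CartanMatrix.E₈_diag i

theorem reflect_eq_add_simpleRoot {i : Fin 8} {c : Fin 8 → ℤ} (hc : c i = -1) :
    reflect i c = c + simpleRoot i := by
  simp [reflect, hc]

theorem reflect_simpleRoot (i : Fin 8) : reflect i (simpleRoot i) = -simpleRoot i := by
  rw [reflect, simpleRoot_self]
  module

theorem reflect_involutive (i : Fin 8) : Function.Involutive (reflect i) := fun c => by
  have hi : reflect i c i = -c i := by
    simp only [reflect, Pi.sub_apply, Pi.smul_apply, smul_eq_mul, simpleRoot_self]
    ring
  rw [reflect, hi, reflect]
  module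

theorem mem_posRoots {c : Fin 8 → ℤ} : c ∈ posRoots ↔ ∃ h < 30, c ∈ rootsOfHeight h := by
  simp only [posRoots, mem_biUnion, mem_range]

theorem card_posRoots : #posRoots = 120 := by
  decide +kernel

theorem rootsOfHeight_thirty : rootsOfHeight 30 = ∅ := by
  decide +kernel

theorem rootsOfHeight_descent : ∀ h < 30, ∀ c ∈ rootsOfHeight h, ∀ i,
    c = simpleRoot i ∨ c i = -1 ∨ c i = 0 ∨ c i = 1 ∧ c - simpleRoot i ∈ rootsOfHeight (h - 1) := by
  decide +kernel

theorem add_simpleRoot_mem_rootsOfHeight {h : ℕ} {c : Fin 8 → ℤ} (hc : c ∈ rootsOfHeight h)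
    {i : Fin 8} (hi : c i = -1) : c + simpleRoot i ∈ rootsOfHeight (h + 1) := by
  cases h with
  | zero => exact absurd hc (notMem_empty c)
  | succ h => exact mem_biUnion.2 ⟨c, hc, mem_image_of_mem _ (by simpa using hi)⟩

theorem simpleRoot_mem_posRoots (i : Fin 8) : simpleRoot i ∈ posRoots :=
  mem_posRoots.2 ⟨1, by simp, mem_image_of_mem _ (mem_univ i)⟩

@[elab_as_elim]
theorem posRoots_induction {p : (Fin 8 → ℤ) → Prop} (simple : ∀ i, p (simpleRoot i))
    (add_simpleRoot : ∀ c i, p c → c i = -1 → p (c + simpleRoot i)) {c : Fin 8 → ℤ}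
    (hc : c ∈ posRoots) : p c := by
  obtain ⟨h, -, hch⟩ := mem_posRoots.1 hc
  clear hc
  induction h using rootsOfHeight.induct generalizing c with
  | case1 => exact absurd hch (notMem_empty c)
  | case2 =>
    obtain ⟨i, -, rfl⟩ := mem_image.1 hch
    exact simple i
  | case3 h ih =>
    obtain ⟨b, hb, hcb⟩ := mem_biUnion.1 hch
    obtain ⟨i, hi, rfl⟩ := mem_image.1 hcb
    exact add_simpleRoot b i (ih hb) (mem_filter.1 hi).2

theorem reflect_mem_posRoots {c : Fin 8 → ℤ} (hc : c ∈ posRoots) {i : Fin 8}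
    (hci : c ≠ simpleRoot i) : reflect i c ∈ posRoots := by
  obtain ⟨h, hh, hch⟩ := mem_posRoots.1 hc
  rcases rootsOfHeight_descent h hh c hch i with hα | hi | hi | ⟨hi, hmem⟩
  · exact absurd hα hci
  · have hmem := add_simpleRoot_mem_rootsOfHeight hch hi
    have h29 : h ≠ 29 := by
      rintro rfl
      rw [rootsOfHeight_thirty] at hmem
      exact notMem_empty _ hmem
    rw [reflect_eq_add_simpleRoot hi]
    exact mem_posRoots.2 ⟨h + 1, by lia, hmem⟩
  · rwa [reflect, hi, zero_smul, sub_zero]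
  · rw [reflect, hi, one_smul]
    exact mem_posRoots.2 ⟨h - 1, by lia, hmem⟩

theorem simpleRoot_dotProduct_halfCosum : ∀ i, simpleRoot i ⬝ᵥ halfCosum = 1 := by
  decide

theorem dotProduct_halfCosum_pos {c : Fin 8 → ℤ} (hc : c ∈ posRoots) : 0 < c ⬝ᵥ halfCosum := by
  refine posRoots_induction (fun i => ?_) (fun c i hpos _ => ?_) hc
  · rw [simpleRoot_dotProduct_halfCosum]
    exact one_pos
  · rw [add_dotProduct, simpleRoot_dotProduct_halfCosum]
    exact add_pos hpos one_pos

theorem exists_isUnit_apply {c : Fin 8 → ℤ} (hc : c ∈ posRoots) : ∃ i, IsUnit (c i) := by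
  refine posRoots_induction (fun i => ?_) (fun c i _ hi => ⟨i, ?_⟩) hc
  · simp only [Int.isUnit_iff]
    revert i
    decide
  · simp [hi, simpleRoot_self]

theorem eq_of_posRoots_of_eq_smul {a b : Fin 8 → ℤ} (ha : a ∈ posRoots) (hb : b ∈ posRoots)
    {q : ℚ} (hq : (fun k => (b k : ℚ)) = q • fun k => (a k : ℚ)) : a = b := by
  obtain ⟨i, hi⟩ := exists_isUnit_apply ha
  obtain ⟨j, hj⟩ := exists_isUnit_apply hb
  have hba : b = (b i * a i) • a := by
    have hqi : q = b i * a i := by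
      have h1 : (a i : ℚ) * a i = 1 := by exact_mod_cast Int.isUnit_mul_self hi
      have h2 : (b i : ℚ) = q * a i := congrFun hq i
      rw [h2, mul_assoc, h1, mul_one]
    ext k
    have hk : (b k : ℚ) = q * a k := congrFun hq k
    rw [hqi] at hk
    exact_mod_cast hk
  have hunit : IsUnit (b i * a i) := by
    rw [hba] at hj
    exact isUnit_of_mul_isUnit_left hj
  rcases Int.isUnit_iff.1 hunit with h | h <;> rw [h] at hba
  · rw [hba, one_smul]
  · have hpos := dotProduct_halfCosum_pos hb
    rw [hba, smul_dotProduct, neg_one_smul] at hpos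
    exact absurd (dotProduct_halfCosum_pos ha) (by lia)

theorem sum_posRoots_reflect {A : Type*} [AddCommMonoid A] {f : (Fin 8 → ℤ) → A}
    (hf : ∀ c, f (-c) = f c) (i : Fin 8) :
    ∑ c ∈ posRoots, f (reflect i c) = ∑ c ∈ posRoots, f c := by
  have hmaps (c) (hc : c ∈ posRoots.erase (simpleRoot i)) :
      reflect i c ∈ posRoots.erase (simpleRoot i) := by
    obtain ⟨hci, hc⟩ := mem_erase.1 hc
    refine mem_erase.2 ⟨fun h => ?_, reflect_mem_posRoots hc hci⟩
    have hneg : c = -simpleRoot i := by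
      rw [← reflect_simpleRoot, ← h, reflect_involutive i c]
    have hpos := dotProduct_halfCosum_pos hc
    rw [hneg, neg_dotProduct, simpleRoot_dotProduct_halfCosum] at hpos
    lia
  rw [← add_sum_erase _ _ (simpleRoot_mem_posRoots i), reflect_simpleRoot, hf,
    ← add_sum_erase _ f (simpleRoot_mem_posRoots i)]
  exact congrArg (f (simpleRoot i) + ·) <| sum_nbij' (reflect i) (reflect i) hmaps hmaps
    (fun c _ => reflect_involutive i c) (fun c _ => reflect_involutive i c) fun _ _ => rfl

/-! ### Invariants and semi-invariants of `W(E₈)` -/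

/-- The linear form on `ℚ⁸` given by an integral coefficient vector. -/
noncomputable def rootForm (c : Fin 8 → ℤ) : MvPolynomial (Fin 8) ℚ :=
  linearForm fun k => (c k : ℚ)

/-- The matrix of the simple reflection `s_i` in the basis of simple roots. -/
def simpleReflection (i : Fin 8) : Matrix (Fin 8) (Fin 8) ℚ :=
  reflectionMatrix (Pi.single i 1) fun k => (simpleRoot i k : ℚ)

/-- The degrees of the basic invariants of `W(E₈)`. -/
def degree : Fin 8 → ℕ :=
  ![2, 8, 12, 14, 18, 20, 24, 30]

/-- The basic invariant of degree `degree k`: the power sum of the positive roots. -/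
noncomputable def basicInvariant (k : Fin 8) : MvPolynomial (Fin 8) ℚ :=
  ∑ c ∈ posRoots, rootForm c ^ degree k

theorem even_degree : ∀ k, Even (degree k) := by
  decide

theorem isHomogeneous_rootForm (c : Fin 8 → ℤ) : (rootForm c).IsHomogeneous 1 :=
  isHomogeneous_linearForm _

theorem isHomogeneous_basicInvariant (k : Fin 8) : (basicInvariant k).IsHomogeneous (degree k) :=
  IsHomogeneous.sum _ _ _ fun c _ => by simpa using (isHomogeneous_rootForm c).pow (degree k)

theorem rootForm_neg (c : Fin 8 → ℤ) : rootForm (-c) = -rootForm c := by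
  rw [rootForm, rootForm, ← map_neg]
  exact congrArg linearForm (funext fun k => Int.cast_neg (c k))

theorem vecMul_simpleReflection (c : Fin 8 → ℤ) (i : Fin 8) :
    Matrix.vecMul (fun k => (c k : ℚ)) (simpleReflection i) = fun k => (reflect i c k : ℚ) := by
  rw [simpleReflection, vecMul_reflectionMatrix, dotProduct_single_one]
  ext k
  simp [reflect]

theorem linearSubst_rootForm (i : Fin 8) (c : Fin 8 → ℤ) :
    linearSubst (simpleReflection i) (rootForm c) = rootForm (reflect i c) := by
  rw [rootForm, linearSubst_linearForm, vecMul_simpleReflection, rootForm]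

theorem basicInvariant_mem_linearInvariants (k : Fin 8) :
    basicInvariant k ∈ linearInvariants simpleReflection := by
  refine mem_linearInvariants.2 fun i => ?_
  simp only [basicInvariant, map_sum, map_pow, linearSubst_rootForm]
  exact sum_posRoots_reflect (f := fun c => rootForm c ^ degree k)
    (fun c => by rw [rootForm_neg, (even_degree k).neg_pow]) i

theorem rootForm_dvd_of_isDetSemiInvariant {P : MvPolynomial (Fin 8) ℚ}
    (hP : IsDetSemiInvariant simpleReflection P) {c : Fin 8 → ℤ} (hc : c ∈ posRoots) :
    rootForm c ∣ P := by
  refine posRoots_induction (fun i => ?_) (fun c i hdvd hi => ?_) hc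
  · exact hP.linearForm_dvd_of_reflectionMatrix (by simp [simpleRoot_self]) (i := i) rfl
  · rw [← reflect_eq_add_simpleRoot hi, rootForm, ← vecMul_simpleReflection]
    exact hP.linearForm_vecMul_dvd hdvd i

theorem coe_ne_zero {c : Fin 8 → ℤ} (hc : c ∈ posRoots) : (fun k => (c k : ℚ)) ≠ 0 := by
  obtain ⟨i, hi⟩ := exists_isUnit_apply hc
  exact fun h => hi.ne_zero (Int.cast_eq_zero.1 (congrFun h i))

theorem prod_rootForm_dvd_of_isDetSemiInvariant {P : MvPolynomial (Fin 8) ℚ}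
    (hP : IsDetSemiInvariant simpleReflection P) : ∏ c ∈ posRoots, rootForm c ∣ P :=
  prod_linearForm_dvd (fun _ hc => coe_ne_zero hc)
    (fun _ ha _ hb hab _ hq => hab (eq_of_posRoots_of_eq_smul ha hb hq))
    fun _ hc => rootForm_dvd_of_isDetSemiInvariant hP hc

theorem totalDegree_prod_rootForm : (∏ c ∈ posRoots, rootForm c).totalDegree = 120 := by
  have hne : ∏ c ∈ posRoots, rootForm c ≠ 0 :=
    prod_ne_zero_iff.2 fun c hc => (irreducible_linearForm (coe_ne_zero hc)).ne_zero
  rw [(IsHomogeneous.prod _ _ _ fun c _ => isHomogeneous_rootForm c).totalDegree hne,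
    ← card_eq_sum_ones, card_posRoots]

/-! ### The Jacobian determinant -/

/-- The value of the Jacobian matrix of the basic invariants at the point `halfCosum`. -/
def jacobianAtHalfCosum : Matrix (Fin 8) (Fin 8) ℤ :=
  Matrix.of fun k j =>
    degree k * ∑ c ∈ posRoots, c j * (c ⬝ᵥ halfCosum) ^ (degree k - 1)

/-- The inverse of `jacobianAtHalfCosum` modulo 31. -/
def jacobianInverse : Matrix (Fin 8) (Fin 8) (ZMod 31) :=
  !![ 6, 16,  0, 12,  2, 27, 30, 27;
     10, 19, 24, 11, 19, 24,  9, 17;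
      5,  5, 12, 22, 29, 29, 12, 15;
     29, 13, 25, 24, 11, 29, 15, 26;
      7,  0, 17,  0, 20,  0,  7, 12;
     24,  3,  0, 27, 12, 21, 21, 21;
     15,  5,  9,  5, 17, 13,  5, 22;
     12,  1,  6, 23, 14, 12, 25, 15]

theorem map_jacobianAtHalfCosum_mul_jacobianInverse :
    jacobianAtHalfCosum.map (Int.castRingHom (ZMod 31)) * jacobianInverse = 1 := by
  decide +kernel

theorem det_jacobianAtHalfCosum_ne_zero : jacobianAtHalfCosum.det ≠ 0 := by
  intro hdet
  have hmod := congrArg Matrix.det map_jacobianAtHalfCosum_mul_jacobianInverse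
  rw [Matrix.det_mul, ← RingHom.mapMatrix_apply, ← RingHom.map_det, hdet, map_zero, zero_mul,
    Matrix.det_one] at hmod
  exact absurd hmod (by decide)

theorem eval_jacobianMatrix_basicInvariant :
    (jacobianMatrix basicInvariant).map (eval fun k => (halfCosum k : ℚ)) =
      jacobianAtHalfCosum.map (Int.castRingHom ℚ) := by
  have hroot (c : Fin 8 → ℤ) :
      eval (fun k => (halfCosum k : ℚ)) (rootForm c) = (c ⬝ᵥ halfCosum : ℤ) := by
    simp [rootForm, eval_linearForm, dotProduct]
  ext1 k j
  rw [Matrix.map_apply, Matrix.map_apply, jacobianMatrix_apply, jacobianAtHalfCosum,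
    Matrix.of_apply, basicInvariant, mul_sum, map_sum, map_sum, map_sum]
  refine sum_congr rfl fun c _ => ?_
  rw [pderiv_pow, map_mul, map_mul, map_natCast, map_pow, hroot, rootForm, pderiv_linearForm,
    eval_C, map_mul, map_mul, map_pow, map_natCast, eq_intCast, eq_intCast]
  ring

theorem det_jacobianMatrix_basicInvariant_ne_zero : (jacobianMatrix basicInvariant).det ≠ 0 := by
  intro hdet
  have heval := congrArg (eval fun k => (halfCosum k : ℚ)) hdet
  rw [RingHom.map_det, RingHom.mapMatrix_apply, eval_jacobianMatrix_basicInvariant,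
    ← RingHom.mapMatrix_apply, ← RingHom.map_det, map_zero] at heval
  exact det_jacobianAtHalfCosum_ne_zero
    ((map_eq_zero_iff _ (Int.castRingHom ℚ).injective_int).1 heval)

theorem det_jacobianMatrix_basicInvariant_dvd {P : MvPolynomial (Fin 8) ℚ}
    (hP : IsDetSemiInvariant simpleReflection P) : (jacobianMatrix basicInvariant).det ∣ P := by
  have hsemi := isDetSemiInvariant_det_jacobianMatrix basicInvariant_mem_linearInvariants
  refine (dvd_of_dvd_of_totalDegree_le (prod_rootForm_dvd_of_isDetSemiInvariant hsemi)
    det_jacobianMatrix_basicInvariant_ne_zero ?_).trans (prod_rootForm_dvd_of_isDetSemiInvariant hP)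
  have hsum : ∑ k, (degree k - 1) = 120 := by decide
  rw [totalDegree_prod_rootForm, ← hsum]
  exact (isHomogeneous_det_jacobianMatrix isHomogeneous_basicInvariant).totalDegree_le

/-! ### The action of `W(E₈)` on polynomials -/

theorem polyAct_eq_linearSubst (g : (Module.End ℚ (Fin 8 → ℚ))ˣ) :
    polyAct g = linearSubst (LinearMap.toMatrix' (g⁻¹).val) := by
  ext k : 1
  rw [polyAct, aeval_X, linearSubst_X, linearForm_apply]
  simp [LinearMap.toMatrix'_apply, smul_eq_C_mul, Matrix.row]

theorem polyAct_one (f : MvPolynomial (Fin 8) ℚ) : polyAct 1 f = f := by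
  rw [polyAct_eq_linearSubst, inv_one, Units.val_one, LinearMap.toMatrix'_one, linearSubst_one,
    AlgHom.id_apply]

theorem polyAct_mul (g h : (Module.End ℚ (Fin 8 → ℚ))ˣ) (f : MvPolynomial (Fin 8) ℚ) :
    polyAct (g * h) f = polyAct g (polyAct h f) := by
  simp only [polyAct_eq_linearSubst, mul_inv_rev, Units.val_mul, LinearMap.toMatrix'_mul,
    linearSubst_mul, AlgHom.comp_apply]

theorem cartanE8_eq (i j : Fin 8) : cartanE8 j i = simpleRoot i j := by
  fin_cases i <;> fin_cases j <;> simp [cartanE8, simpleRoot, CartanMatrix.E₈]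

theorem polyAct_sE8 (i : Fin 8) : polyAct (sE8 i) = linearSubst (simpleReflection i) := by
  rw [polyAct_eq_linearSubst]
  congr 1
  ext k j
  change reflE8 i (Pi.single j 1) k = _
  simp [reflE8, phiE8_apply, cartanE8_eq, simpleReflection, reflectionMatrix,
    Matrix.vecMulVec_apply, Matrix.one_apply, Pi.single_apply, eq_comm, mul_comm]

theorem forall_polyAct_eq_iff {f : MvPolynomial (Fin 8) ℚ} :
    (∀ g ∈ WeylE8, polyAct g f = f) ↔ f ∈ linearInvariants simpleReflection := by
  simp only [mem_linearInvariants, ← polyAct_sE8]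
  refine ⟨fun hf i => hf _ (Subgroup.subset_closure ⟨i, rfl⟩), fun hf g hg => ?_⟩
  induction hg using Subgroup.closure_induction with
  | mem _ hs =>
    obtain ⟨i, rfl⟩ := hs
    exact hf i
  | one => exact polyAct_one f
  | mul g h _ _ hg hh => rw [polyAct_mul, hh, hg]
  | inv g _ hg =>
    conv_lhs => rw [← hg]
    rw [← polyAct_mul, inv_mul_cancel, polyAct_one]

end WeylE8

/-- There exist homogeneous `W(E₈)`-invariant polynomials
`I₂, I₈, I₁₂, I₁₄, I₁₈, I₂₀, I₂₄, I₃₀` of the indicated degrees which are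
algebraically independent over `ℚ` and generate the invariant subalgebra
`ℚ[x₁,…,x₈]^{W(E₈)}`. -/
theorem basic_invariants_of_WE8 :
    ∃ I : Fin 8 → MvPolynomial (Fin 8) ℚ,
      (∀ k : Fin 8, (I k).IsHomogeneous (![2, 8, 12, 14, 18, 20, 24, 30] k)) ∧
      (∀ k : Fin 8, ∀ g ∈ WeylE8, polyAct g (I k) = I k) ∧
      AlgebraicIndependent ℚ I ∧
      (Algebra.adjoin ℚ (Set.range I) : Set (MvPolynomial (Fin 8) ℚ)) =
        {f : MvPolynomial (Fin 8) ℚ | ∀ g ∈ WeylE8, polyAct g f = f} := by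
  have hJ := WeylE8.det_jacobianMatrix_basicInvariant_ne_zero
  refine ⟨WeylE8.basicInvariant, WeylE8.isHomogeneous_basicInvariant,
    fun k => WeylE8.forall_polyAct_eq_iff.2 (WeylE8.basicInvariant_mem_linearInvariants k),
    algebraicIndependent_of_det_jacobianMatrix_ne_zero hJ, ?_⟩
  rw [← linearInvariants_eq_adjoin_of_det_jacobianMatrix_dvd WeylE8.isHomogeneous_basicInvariant
    WeylE8.basicInvariant_mem_linearInvariants hJ
    fun _ => WeylE8.det_jacobianMatrix_basicInvariant_dvd]
  ext f
  exact WeylE8.forall_polyAct_eq_iff.symm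
end

section
/- The group W(E₈) is finite of order 696729600; that is, the subgroup of GL(ℚ⁸) generated by the eight simple reflections s_1,…,s_8 of type E₈ has exactly 696729600 elements. -/
open MvPolynomial

/-!
The order is a product of orbit sizes along the chain of parabolic subgroups `W_m = ⟨s_1, …, s_m⟩`,
that is, along `1 ⊂ W(A₁) ⊂ W(A₁ × A₁) ⊂ W(A₂ × A₁) ⊂ W(A₄) ⊂ W(D₅) ⊂ W(E₆) ⊂ W(E₇) ⊂ W(E₈)`.
Each `W_(m-1)` is the stabilizer in `W_m` of a root `b` that is orthogonal to `α_1, …, α_(m-1)` but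
not to `α_m`: elements of `W_m` preserve the coordinates after the `m`-th, so invariance of the
bilinear form shows that `g` fixes `b` exactly if it also preserves the `m`-th coordinate. If `b` is
lowest, its orbit under `W_m` consists of all roots with the same coordinates after the `m`-th,
since every other such root is lowered by a reflection in `W_m`. The orbit sizes are read off the
list of the `240` roots.
-/

open Matrix Module Pointwise Finset

section Orbit

variable {G α : Type*} [Group G] [MulAction G α]

lemma ncard_orbit_mul_card_inf_stabilizer (H : Subgroup G) (a : α) :
    (MulAction.orbit H a).ncard * Nat.card ↥(H ⊓ MulAction.stabilizer G a) = Nat.card H := by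
  have hindex : (H ⊓ MulAction.stabilizer G a).relIndex H = (MulAction.orbit H a).ncard := by
    rw [Subgroup.inf_relIndex_left, ← MulAction.index_stabilizer]
    rfl
  rw [← hindex, mul_comm, ← Subgroup.relIndex_bot_left, ← Subgroup.relIndex_bot_left]
  exact Subgroup.relIndex_mul_relIndex _ _ _ bot_le inf_le_left

lemma subset_orbit_of_forall_exists_lt {β : Type*} [Preorder β] {C : Set α} (hC : C.Finite)
    (f : α → β) {a : α}
    (hdescent : ∀ c ∈ C, c ≠ a → ∃ g : G, g • c ∈ C ∧ f (g • c) < f c) :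
    C ⊆ MulAction.orbit G a := by
  have hwf : C.WellFoundedOn (fun c d => f c < f d) :=
    Set.wellFoundedOn_image.1 (hC.image f).wellFoundedOn
  intro c hc
  refine hwf.induction hc fun c hc ih => ?_
  by_cases hca : c = a
  · rw [hca]
    exact MulAction.mem_orbit_self a
  · obtain ⟨g, hgC, hlt⟩ := hdescent c hc hca
    rw [← MulAction.orbit_eq_iff, ← MulAction.orbit_smul g c, MulAction.orbit_eq_iff]
    exact ih _ hgC hlt

end Orbit

lemma smul_eq_self_iff_of_separatingLeft {G R M : Type*} [Group G] [CommRing R] [AddCommGroup M]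
    [Module R M] [MulAction G M] {B : LinearMap.BilinForm R M} (hB : B.SeparatingLeft) {g : G}
    (hg : ∀ x y, B (g • x) (g • y) = B x y) (x : M) :
    g • x = x ↔ ∀ y, B x (g • y) = B x y := by
  refine ⟨fun hx y => by rw [← hg x y, hx], fun hx => sub_eq_zero.1 (hB _ fun y => ?_)⟩
  have hy : g • g⁻¹ • y = y := smul_inv_smul g y
  rw [map_sub, LinearMap.sub_apply, sub_eq_zero, ← hy, hg, hx]

lemma cartanE8_eq_map : cartanE8 = CartanMatrix.E₈.map (Int.castRingHom ℚ) := by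
  decide +kernel

lemma cartanE8_isSymm : cartanE8.IsSymm := by
  rw [cartanE8_eq_map]
  exact CartanMatrix.E₈_isSymm.map _

lemma cartanE8_det : cartanE8.det = 1 := by
  rw [cartanE8_eq_map, ← RingHom.mapMatrix_apply, ← RingHom.map_det, CartanMatrix.E₈_det, map_one]

/-- The Weyl-invariant symmetric bilinear form on `ℚ⁸` with `(α_i, α_j) = A i j`. -/
def formE8 : LinearMap.BilinForm ℚ (Fin 8 → ℚ) :=
  Matrix.toBilin' cartanE8

lemma formE8_apply (v w : Fin 8 → ℚ) : formE8 v w = ∑ i, phiE8 i v * w i := by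
  rw [formE8, toBilin'_apply', dotProduct_mulVec]
  simp only [dotProduct, vecMul_apply_eq_sum, phiE8_apply, mul_comm (cartanE8 _ _)]

lemma formE8_separatingLeft : formE8.SeparatingLeft :=
  (LinearMap.BilinForm.nondegenerate_toBilin'_of_det_ne_zero' _
    (cartanE8_det ▸ one_ne_zero)).1

lemma formE8_single_right (v : Fin 8 → ℚ) (i : Fin 8) :
    formE8 v (Pi.single i 1) = phiE8 i v := by
  simp [formE8_apply, Pi.single_apply]

lemma formE8_comm (v w : Fin 8 → ℚ) : formE8 v w = formE8 w v := by
  rw [formE8, toBilin'_apply', toBilin'_apply', dotProduct_mulVec, ← mulVec_transpose,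
    cartanE8_isSymm, dotProduct_comm]

lemma formE8_single_left (v : Fin 8 → ℚ) (i : Fin 8) :
    formE8 (Pi.single i 1) v = phiE8 i v := by
  rw [formE8_comm, formE8_single_right]

lemma sE8_smul (i : Fin 8) (v : Fin 8 → ℚ) : sE8 i • v = v - phiE8 i v • Pi.single i 1 :=
  rfl

lemma sE8_smul_apply_of_ne {i j : Fin 8} (hij : i ≠ j) (v : Fin 8 → ℚ) : (sE8 i • v) j = v j := by
  simp [sE8_smul, hij.symm]

lemma sum_sE8_smul (i : Fin 8) (v : Fin 8 → ℚ) : ∑ j, (sE8 i • v) j = ∑ j, v j - phiE8 i v := by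
  simp [sE8_smul, Pi.single_apply]

lemma sE8_mem_WeylE8 (i : Fin 8) : sE8 i ∈ WeylE8 :=
  Subgroup.subset_closure (Set.mem_range_self i)

lemma formE8_smul_smul {g : (End ℚ (Fin 8 → ℚ))ˣ} (hg : g ∈ WeylE8) (v w : Fin 8 → ℚ) :
    formE8 (g • v) (g • w) = formE8 v w := by
  induction hg using Subgroup.closure_induction generalizing v w with
  | mem _ hs =>
    obtain ⟨i, rfl⟩ := hs
    simp only [sE8_smul, map_sub, map_smul, LinearMap.sub_apply, LinearMap.smul_apply, smul_eq_mul,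
      formE8_single_left, formE8_single_right, phiE8_single]
    ring
  | one => rw [one_smul, one_smul]
  | mul g h _ _ ihg ihh => rw [mul_smul, mul_smul, ihg, ihh]
  | inv g _ ih => rw [← ih, smul_inv_smul, smul_inv_smul]

/-- The inclusion `ℤ⁸ → ℚ⁸` of the root lattice. All roots lie in its image, which keeps the
finite computations below integral. -/
def latticeE8 : (Fin 8 → ℤ) →+ (Fin 8 → ℚ) :=
  (Int.castAddHom ℚ).compLeft (Fin 8)

lemma latticeE8_apply (v : Fin 8 → ℤ) (j : Fin 8) : latticeE8 v j = v j :=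
  rfl

lemma latticeE8_injective : Function.Injective latticeE8 :=
  Int.cast_injective.comp_left

/-- The functional `phiE8 i` on the root lattice. -/
def latticePhiE8 (i : Fin 8) (v : Fin 8 → ℤ) : ℤ :=
  (v ᵥ* CartanMatrix.E₈) i

lemma phiE8_latticeE8 (i : Fin 8) (v : Fin 8 → ℤ) :
    phiE8 i (latticeE8 v) = latticePhiE8 i v := by
  simp [phiE8_apply, latticePhiE8, vecMul_apply_eq_sum, latticeE8_apply, cartanE8_eq_map, mul_comm]

/-- The simple reflection `s_i` on the root lattice. -/
def latticeReflE8 (i : Fin 8) (v : Fin 8 → ℤ) : Fin 8 → ℤ :=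
  v - latticePhiE8 i v • Pi.single i 1

lemma sE8_smul_latticeE8 (i : Fin 8) (v : Fin 8 → ℤ) :
    sE8 i • latticeE8 v = latticeE8 (latticeReflE8 i v) := by
  ext j
  simp [sE8_smul, latticeReflE8, phiE8_latticeE8, latticeE8_apply, Pi.single_apply]

lemma latticeReflE8_neg (i : Fin 8) (v : Fin 8 → ℤ) :
    latticeReflE8 i (-v) = -latticeReflE8 i v := by
  simp only [latticeReflE8, latticePhiE8, neg_vecMul, Pi.neg_apply]
  module

/-- The vectors `s_i v` below some `v ∈ L`, i.e. those with `s_i v = v - c • α_i` for some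
`c > 0`. Without `dedup` the iterates would grow with the number of descending paths. -/
def descentsE8 (L : List (Fin 8 → ℤ)) : List (Fin 8 → ℤ) :=
  (L.flatMap fun v =>
    ((List.finRange 8).filter (0 < latticePhiE8 · v)).map (latticeReflE8 · v)).dedup

lemma mem_descentsE8 {L : List (Fin 8 → ℤ)} {w : Fin 8 → ℤ} :
    w ∈ descentsE8 L ↔ ∃ v ∈ L, ∃ i, 0 < latticePhiE8 i v ∧ latticeReflE8 i v = w := by
  simp [descentsE8]

/-- The highest root of `E₈` in the basis of simple roots. -/
def highestRootE8 : Fin 8 → ℤ :=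
  ![2, 3, 4, 6, 5, 4, 3, 2]

/-- The roots of `E₈` in the basis of simple roots, obtained by descending from the highest root;
the `58` layers are the heights `29, …, 1, -1, …, -29`. -/
def rootsE8 : Finset (Fin 8 → ℤ) :=
  (List.iterate descentsE8 [highestRootE8] 58).flatten.toFinset

lemma mem_rootsE8 {v : Fin 8 → ℤ} :
    v ∈ rootsE8 ↔ ∃ m < 58, v ∈ descentsE8^[m] [highestRootE8] := by
  simp only [rootsE8, List.mem_toFinset, List.mem_flatten, List.mem_iterate]
  aesop

lemma iterate_descentsE8_highestRootE8 : descentsE8^[58] [highestRootE8] = [] := by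
  decide +kernel

lemma neg_mem_rootsE8 {v : Fin 8 → ℤ} (hv : v ∈ rootsE8) : -v ∈ rootsE8 := by
  rw [rootsE8, List.mem_toFinset] at hv ⊢
  revert v
  decide +kernel

lemma latticeReflE8_mem_rootsE8_of_pos {i : Fin 8} {v : Fin 8 → ℤ} (hv : v ∈ rootsE8)
    (hi : 0 < latticePhiE8 i v) : latticeReflE8 i v ∈ rootsE8 := by
  obtain ⟨m, hm, hvm⟩ := mem_rootsE8.1 hv
  have hsv : latticeReflE8 i v ∈ descentsE8^[m + 1] [highestRootE8] := by
    rw [Function.iterate_succ_apply', mem_descentsE8]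
    exact ⟨v, hvm, i, hi, rfl⟩
  refine mem_rootsE8.2 ⟨m + 1, Nat.lt_of_le_of_ne hm ?_, hsv⟩
  rintro (hlast : m + 1 = 58)
  simp [hlast, iterate_descentsE8_highestRootE8] at hsv

lemma latticeReflE8_mem_rootsE8 (i : Fin 8) {v : Fin 8 → ℤ} (hv : v ∈ rootsE8) :
    latticeReflE8 i v ∈ rootsE8 := by
  obtain hneg | hzero | hpos := lt_trichotomy (latticePhiE8 i v) 0
  · have hmem : latticeReflE8 i (-v) ∈ rootsE8 :=
      latticeReflE8_mem_rootsE8_of_pos (neg_mem_rootsE8 hv) <| by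
        rwa [latticePhiE8, neg_vecMul, Pi.neg_apply, neg_pos]
    rw [latticeReflE8_neg] at hmem
    exact neg_neg (latticeReflE8 i v) ▸ neg_mem_rootsE8 hmem
  · rwa [latticeReflE8, hzero, zero_smul, sub_zero]
  · exact latticeReflE8_mem_rootsE8_of_pos hv hpos

lemma exists_mem_rootsE8_latticeE8_eq_smul {g : (End ℚ (Fin 8 → ℚ))ˣ} (hg : g ∈ WeylE8)
    {v : Fin 8 → ℤ} (hv : v ∈ rootsE8) : ∃ w ∈ rootsE8, latticeE8 w = g • latticeE8 v := by
  have hle : WeylE8 ≤ MulAction.stabilizer _ (rootsE8.image latticeE8) := by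
    rw [WeylE8, Subgroup.closure_le]
    rintro _ ⟨i, rfl⟩
    refine MulAction.mem_stabilizer_finset'.2 <| forall_mem_image.2 fun w hw => ?_
    rw [sE8_smul_latticeE8]
    exact mem_image_of_mem _ (latticeReflE8_mem_rootsE8 i hw)
  exact mem_image.1 (MulAction.mem_stabilizer_finset'.1 (hle hg) (mem_image_of_mem _ hv))

/-- The elements of `W(E₈)` that preserve every coordinate of (0-based) index at least `m`. This is
the parabolic subgroup generated by the first `m` simple reflections, described so that stabilizers
of vectors are easily recognized. -/
def parabolicE8 (m : ℕ) : Subgroup (End ℚ (Fin 8 → ℚ))ˣ where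
  carrier := {g | g ∈ WeylE8 ∧ ∀ (v : Fin 8 → ℚ) (j : Fin 8), m ≤ j → (g • v) j = v j}
  one_mem' := ⟨one_mem _, fun _ _ _ => rfl⟩
  mul_mem' hg hh := ⟨mul_mem hg.1 hh.1, fun v j hj => (hg.2 _ j hj).trans (hh.2 v j hj)⟩
  inv_mem' {g} hg := ⟨inv_mem hg.1, fun v j hj => by rw [← hg.2 (g⁻¹ • v) j hj, smul_inv_smul]⟩

lemma parabolicE8_zero : parabolicE8 0 = ⊥ :=
  (Subgroup.eq_bot_iff_forall _).2 fun _ hg =>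
    Units.ext <| LinearMap.ext fun v => funext fun j => hg.2 v j (Nat.zero_le _)

lemma parabolicE8_eight : parabolicE8 8 = WeylE8 :=
  Subgroup.ext fun _ => and_iff_left fun _ j hj => absurd j.is_lt hj.not_gt

lemma sE8_mem_parabolicE8 {i : Fin 8} {m : ℕ} (hi : i < m) : sE8 i ∈ parabolicE8 m :=
  ⟨sE8_mem_WeylE8 i, fun v _ hj => sE8_smul_apply_of_ne (Fin.ne_of_lt (hi.trans_le hj)) v⟩

/-- `lowestRootE8 k` is the lowest root in its orbit under the parabolic subgroup
`parabolicE8 (k + 1)`; it is orthogonal to the simple roots before the `k`-th (0-based), but not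
to the `k`-th. -/
def lowestRootE8 : Fin 8 → Fin 8 → ℤ :=
  ![Pi.single 2 1, Pi.single 3 1, ![1, 2, 2, 4, 3, 2, 1, 0], Pi.single 4 1, Pi.single 5 1,
    Pi.single 6 1, Pi.single 7 1, -highestRootE8]

lemma latticePhiE8_lowestRootE8_of_lt : ∀ k, ∀ i < k, latticePhiE8 i (lowestRootE8 k) = 0 := by
  decide +kernel

lemma latticePhiE8_lowestRootE8_self_ne_zero : ∀ k, latticePhiE8 k (lowestRootE8 k) ≠ 0 := by
  decide +kernel

lemma lowestRootE8_mem_rootsE8 : ∀ k, lowestRootE8 k ∈ rootsE8 := by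
  simp only [rootsE8, List.mem_toFinset]
  decide +kernel

lemma formE8_lowestRootE8_smul_sub {k : Fin 8} {g : (End ℚ (Fin 8 → ℚ))ˣ}
    (hg : g ∈ parabolicE8 (k + 1)) (v : Fin 8 → ℚ) :
    formE8 (latticeE8 (lowestRootE8 k)) (g • v) - formE8 (latticeE8 (lowestRootE8 k)) v =
      latticePhiE8 k (lowestRootE8 k) * ((g • v) k - v k) := by
  simp only [formE8_apply, phiE8_latticeE8, ← sum_sub_distrib, ← mul_sub]
  refine sum_eq_single_of_mem k (mem_univ k) fun i _ hik => ?_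
  obtain hlt | hgt := lt_or_gt_of_ne hik
  · rw [latticePhiE8_lowestRootE8_of_lt k i hlt, Int.cast_zero, zero_mul]
  · rw [hg.2 v i hgt, sub_self, mul_zero]

lemma mem_parabolicE8_iff_succ {k : Fin 8} {g : (End ℚ (Fin 8 → ℚ))ˣ} :
    g ∈ parabolicE8 k ↔ g ∈ parabolicE8 (k + 1) ∧ ∀ v : Fin 8 → ℚ, (g • v) k = v k := by
  refine ⟨fun hg => ⟨⟨hg.1, fun v j hj => hg.2 v j (Nat.le_of_succ_le hj)⟩,
    fun v => hg.2 v k le_rfl⟩, fun ⟨hg, hk⟩ => ⟨hg.1, fun v j hj => ?_⟩⟩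
  obtain rfl | hlt := eq_or_lt_of_le (Fin.le_def.2 hj)
  · exact hk v
  · exact hg.2 v j hlt

lemma parabolicE8_inf_stabilizer_lowestRootE8 (k : Fin 8) :
    parabolicE8 (k + 1) ⊓ MulAction.stabilizer _ (latticeE8 (lowestRootE8 k)) = parabolicE8 k := by
  ext g
  rw [Subgroup.mem_inf, MulAction.mem_stabilizer_iff, mem_parabolicE8_iff_succ]
  refine and_congr_right fun hg => ?_
  rw [smul_eq_self_iff_of_separatingLeft formE8_separatingLeft (formE8_smul_smul hg.1)]
  refine forall_congr' fun v => ?_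
  rw [← sub_eq_zero, formE8_lowestRootE8_smul_sub hg, mul_eq_zero_iff_left
    (Int.cast_ne_zero.2 (latticePhiE8_lowestRootE8_self_ne_zero k)), sub_eq_zero]

/-- The roots that agree with `lowestRootE8 k` in every coordinate after the `k`-th: its orbit under
`parabolicE8 (k + 1)`. -/
def levelRootsE8 (k : Fin 8) : Finset (Fin 8 → ℤ) :=
  {v ∈ rootsE8 | ∀ j > k, v j = lowestRootE8 k j}

lemma mem_levelRootsE8 {k : Fin 8} {v : Fin 8 → ℤ} :
    v ∈ levelRootsE8 k ↔ v ∈ rootsE8 ∧ ∀ j > k, v j = lowestRootE8 k j :=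
  mem_filter

lemma card_levelRootsE8 : ∀ k, #(levelRootsE8 k) = ![2, 2, 3, 10, 16, 27, 56, 240] k := by
  decide +kernel

lemma exists_latticePhiE8_pos : ∀ v ∈ rootsE8, ∀ k, (∀ j > k, v j = lowestRootE8 k j) →
    v ≠ lowestRootE8 k → ∃ i ≤ k, 0 < latticePhiE8 i v := by
  simp only [rootsE8, List.mem_toFinset]
  decide +kernel

lemma smul_mem_image_levelRootsE8 {k : Fin 8} {g : (End ℚ (Fin 8 → ℚ))ˣ}
    (hg : g ∈ parabolicE8 (k + 1)) {v : Fin 8 → ℤ} (hv : v ∈ levelRootsE8 k) :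
    g • latticeE8 v ∈ latticeE8 '' levelRootsE8 k := by
  obtain ⟨hroot, hlevel⟩ := mem_levelRootsE8.1 hv
  obtain ⟨w, hw, hgv⟩ := exists_mem_rootsE8_latticeE8_eq_smul hg.1 hroot
  refine ⟨w, mem_levelRootsE8.2 ⟨hw, fun j hj => ?_⟩, hgv⟩
  rw [← hlevel j hj, ← Int.cast_inj (α := ℚ), ← latticeE8_apply, ← latticeE8_apply, hgv]
  exact hg.2 _ j hj

lemma orbit_lowestRootE8 (k : Fin 8) :
    MulAction.orbit (parabolicE8 (k + 1)) (latticeE8 (lowestRootE8 k)) =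
      latticeE8 '' levelRootsE8 k := by
  apply Set.Subset.antisymm
  · rintro _ ⟨g, rfl⟩
    exact smul_mem_image_levelRootsE8 g.2
      (mem_levelRootsE8.2 ⟨lowestRootE8_mem_rootsE8 k, fun _ _ => rfl⟩)
  · refine subset_orbit_of_forall_exists_lt ((levelRootsE8 k).finite_toSet.image _)
      (fun v => ∑ j, v j) ?_
    rintro _ ⟨v, hv, rfl⟩ hne
    obtain ⟨hroot, hlevel⟩ := mem_levelRootsE8.1 hv
    obtain ⟨i, hik, hpos⟩ := exists_latticePhiE8_pos v hroot k hlevel (ne_of_apply_ne _ hne)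
    have hi : sE8 i ∈ parabolicE8 (k + 1) := sE8_mem_parabolicE8 (Nat.lt_succ_of_le hik)
    refine ⟨⟨sE8 i, hi⟩, smul_mem_image_levelRootsE8 hi hv, ?_⟩
    calc ∑ j, (sE8 i • latticeE8 v) j = ∑ j, latticeE8 v j - phiE8 i (latticeE8 v) :=
          sum_sE8_smul i _
      _ < ∑ j, latticeE8 v j := sub_lt_self _ (by rw [phiE8_latticeE8]; exact_mod_cast hpos)

lemma card_parabolicE8_succ (k : Fin 8) :
    Nat.card (parabolicE8 (k + 1)) = #(levelRootsE8 k) * Nat.card (parabolicE8 k) := by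
  rw [← ncard_orbit_mul_card_inf_stabilizer _ (latticeE8 (lowestRootE8 k)), orbit_lowestRootE8,
    parabolicE8_inf_stabilizer_lowestRootE8, Set.ncard_image_of_injective _ latticeE8_injective,
    Set.ncard_coe_finset]

lemma card_parabolicE8 (m : ℕ) (hm : m ≤ 8) :
    Nat.card (parabolicE8 m) = ∏ k : Fin m, #(levelRootsE8 (k.castLE hm)) := by
  induction m with
  | zero => rw [parabolicE8_zero, Subgroup.card_bot, Fin.prod_univ_zero]
  | succ m ih =>
    rw [Fin.prod_univ_castSucc, mul_comm, card_parabolicE8_succ ⟨m, hm⟩, ih (by lia)]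
    rfl

/-- The Weyl group `W(E₈)` is finite of order `696729600`. -/
theorem card_WeylE8 : Nat.card WeylE8 = 696729600 := by
  calc Nat.card WeylE8 = Nat.card (parabolicE8 8) := by rw [parabolicE8_eight]
    _ = ∏ k : Fin 8, #(levelRootsE8 k) := card_parabolicE8 8 le_rfl
    _ = ∏ k : Fin 8, ![2, 2, 3, 10, 16, 27, 56, 240] k :=
      Finset.prod_congr rfl fun k _ => card_levelRootsE8 k
    _ = 696729600 := by decide
end
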